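/- Assume an interval type 𝕀 : Type with elements O, 1 : 𝕀 such that O ≠ 1, and cofibrancy data cof : Type → Type with an element cof⊥ : cof Empty. Then the family P : 𝕀 → Type defined by P i := (O = i) admits no CCHM fibration structure over 𝕀: there is a function isFib 𝕀 P → False. -/

import Mathlib

namespace Crisp

/-! CCHM fibrations in the internal language (Section 2 of the paper). -/

universe u v

/-- The path functor `Path A = 𝕀 → A`. -/
def Path (𝕀 : Type) (A : Type u) : Type u := 𝕀 → A

/-- Functorial action of `Path` (postcomposition). -/
def Path' (𝕀 : Type) {A : Type u} {B : Type v} (f : A → B) (p : Path 𝕀 A) : Path 𝕀 B :=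
  fun i => f (p i)

/-- The extension relation `t ↗ x`: the partial element `t` extends to `x`. -/
def Extends {φ : Type} {A : Type u} (t : φ → A) (x : A) : Prop :=
  ∀ u : φ, t u = x

/-- CCHM composition structure for a path of types `P : 𝕀 → Type`. -/
def CCHM (𝕀 : Type) (O I1 : 𝕀) (cof : Type → Type) (P : 𝕀 → Type) : Type 1 :=
  (φ : Type) → cof φ → (p : ∀ i : 𝕀, φ → P i) →
    (Σ' a₀ : P O, Extends (p O) a₀) → Σ' a₁ : P I1, Extends (p I1) a₁

/-- CCHM fibration structures for a family `A : Γ → Type`. -/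
def isFib (𝕀 : Type) (O I1 : 𝕀) (cof : Type → Type) (Γ : Type u) (A : Γ → Type) :
    Type (max u 1) :=
  (p : Path 𝕀 Γ) → CCHM 𝕀 O I1 cof (fun i => A (p i))

/-- Fibrations over `Γ`: families with a fibration structure. -/
def Fib (𝕀 : Type) (O I1 : 𝕀) (cof : Type → Type) (Γ : Type u) : Type (max u 1) :=
  Σ A : Γ → Type, isFib 𝕀 O I1 cof Γ A

/-- Re-indexing of a fibration along `γ : Γ' → Γ`. -/
def reindex {𝕀 : Type} {O I1 : 𝕀} {cof : Type → Type} {Γ : Type u} {Γ' : Type v}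
    (Φ : Fib 𝕀 O I1 cof Γ) (γ : Γ' → Γ) : Fib 𝕀 O I1 cof Γ' :=
  ⟨fun x => Φ.1 (γ x), fun p => Φ.2 (Path' 𝕀 γ p)⟩

/-- the family `P i := (O = i)` over `𝕀` admits no CCHM fibration
structure, given that `O ≠ 1` and the empty type is cofibrant. -/
theorem no_fibration_structure (𝕀 : Type) (O I1 : 𝕀) (hOI : (O = I1) → False)
    (cof : Type → Type) (cofBot : cof Empty) :
    isFib 𝕀 O I1 cof 𝕀 (fun i => PLift (O = i)) → False := by
  intro α
  -- Compose along the identity path with the empty partial element, starting from `rfl : O = O`.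
  exact hOI (α id Empty cofBot (fun _ u => u.elim) ⟨⟨rfl⟩, fun u => u.elim⟩).1.down

end Crisp
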